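/- arXiv:0812.2522 — 6 statements merged into one kernel-verified Lean document; each statement's English description precedes it below -/
import Mathlib

section
/- Let R ⊆ V × W be a relation between finite nonempty sets V and W with |V| = |W|, and suppose that |R(Y)| ≥ |Y| + 1 for every nonempty proper subset Y of V, where R(Y) = {w ∈ W : (y,w) ∈ R for some y ∈ Y}. Then every pair (x,y) ∈ R lies in some matching of R (a matching of R is a bijection f : V → W with (v, f(v)) ∈ R for every v ∈ V). In particular, the number μ(R) of matchings of R satisfies μ(R) ≥ max{Δ(R), Δ⁻¹(R)}, where Δ(R) = max_{x∈V} |R(x)| and Δ⁻¹(R) = max_{y∈W} |{x ∈ V : (x,y) ∈ R}|. -/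
/-!
Fix `(x, y) ∈ R`. Deleting `y` from the neighbourhood of a set `A` that misses `x` costs at most
one element, which the surplus in the expansion hypothesis pays for; hence Hall's condition
survives when `x` is forced to take `y` and `y` is withheld from every other vertex. Hall's theorem
then gives an injection through `(x, y)`, a bijection because `|V| = |W|`. For the counting bound,
matchings through `(x, y)` and `(x, y')` with `y ≠ y'` are distinct, so `R(x)` injects into the set
of matchings, and dually for the preimage of a fixed `y`.
-/

/-- Under the expansion hypothesis, every pair of the relation extends to a matching. -/
theorem exists_matching_through {V W : Type*} [Fintype V] [Fintype W]
    (R : V → W → Prop) [∀ x y, Decidable (R x y)] [DecidableEq V]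
    (hcard : Fintype.card V = Fintype.card W)
    (hexp : ∀ Y : Finset V, Y.Nonempty → Y ≠ Finset.univ →
      Y.card + 1 ≤ (Finset.univ.filter fun w => ∃ y ∈ Y, R y w).card)
    (x : V) (y : W) (hxy : R x y) : ∃ f : V ≃ W, (∀ v, R v (f v)) ∧ f x = y := by
  classical
  have key : ∀ A : Finset V, x ∉ A →
      A.card ≤ ((Finset.univ.filter fun w => ∃ v ∈ A, R v w).erase y).card := by
    intro A hxA
    rcases A.eq_empty_or_nonempty with rfl | hA
    · simp
    · have h1 := hexp A hA (fun h => hxA (h ▸ Finset.mem_univ x))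
      have h2 := Finset.pred_card_le_card_erase (s := Finset.univ.filter fun w => ∃ v ∈ A, R v w)
        (a := y)
      omega
  -- The neighbourhoods after forcing `x ↦ y` and withholding `y` from all other vertices.
  let t : V → Finset W := fun v =>
    if v = x then {y} else (Finset.univ.filter fun w => R v w).erase y
  have hall : ∀ s : Finset V, s.card ≤ (s.biUnion t).card := by
    intro s
    have hsub : ((Finset.univ.filter fun w => ∃ v ∈ s.erase x, R v w).erase y) ⊆
        s.biUnion t := by
      intro w hw
      simp only [Finset.mem_erase, Finset.mem_filter, Finset.mem_univ, true_and] at hw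
      obtain ⟨hwy, v, ⟨hvx, hvs⟩, hR⟩ := hw
      exact Finset.mem_biUnion.2 ⟨v, hvs, by simp [t, hvx, hwy, hR]⟩
    have hk := key (s.erase x) (Finset.notMem_erase x s)
    by_cases hx : x ∈ s
    · have hy : y ∈ s.biUnion t := Finset.mem_biUnion.2 ⟨x, hx, by simp [t]⟩
      have h1 := Finset.card_le_card (Finset.insert_subset hy hsub)
      rw [Finset.card_insert_of_notMem (Finset.notMem_erase y _)] at h1
      have h2 := Finset.card_erase_add_one hx
      omega
    · rw [Finset.erase_eq_of_notMem hx] at hk hsub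
      exact hk.trans (Finset.card_le_card hsub)
  obtain ⟨f, hf, hft⟩ := (Finset.all_card_le_biUnion_card_iff_exists_injective t).1 hall
  have hfx : f x = y := by simpa [t] using hft x
  refine ⟨Equiv.ofBijective f ((Fintype.bijective_iff_injective_and_card f).2 ⟨hf, hcard⟩),
    fun v => ?_, hfx⟩
  change R v (f v)
  by_cases hv : v = x
  · subst hv
    rwa [hfx]
  · have := hft v
    simp only [t, if_neg hv, Finset.mem_erase, Finset.mem_filter, Finset.mem_univ,
      true_and] at this
    exact this.2

theorem stmt2 {V W : Type*} [Fintype V] [Fintype W] [Nonempty V] [Nonempty W]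
    (R : V → W → Prop) [∀ x y, Decidable (R x y)] [DecidableEq V]
    (hcard : Fintype.card V = Fintype.card W)
    (hexp : ∀ Y : Finset V, Y.Nonempty → Y ≠ Finset.univ →
      Y.card + 1 ≤ (Finset.univ.filter fun w => ∃ y ∈ Y, R y w).card) :
    (∀ x y, R x y → ∃ f : V ≃ W, (∀ v, R v (f v)) ∧ f x = y) ∧
    max (Finset.univ.sup fun x : V => ((Finset.univ : Finset W).filter fun w => R x w).card)
        (Finset.univ.sup fun y : W => ((Finset.univ : Finset V).filter fun x => R x y).card) ≤
      Nat.card {f : V ≃ W // ∀ v, R v (f v)} := by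
  have main := exists_matching_through R hcard hexp
  refine ⟨main, max_le (Finset.sup_le fun x _ => ?_) (Finset.sup_le fun y _ => ?_)⟩
  · choose g hg hgx using fun w => main x w
    rw [← Fintype.card_coe, ← Nat.card_eq_fintype_card]
    refine Nat.card_le_card_of_injective
      (fun w => ⟨g w.1 (Finset.mem_filter.1 w.2).2, hg w.1 (Finset.mem_filter.1 w.2).2⟩) ?_
    intro a b hab
    -- The chosen matching determines `w` as its value at `x`.
    have h := congrArg (fun f => f.1 x) hab
    simp only [hgx] at h
    exact Subtype.ext h
  · choose g hg hgx using fun v => main v y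
    rw [← Fintype.card_coe, ← Nat.card_eq_fintype_card]
    refine Nat.card_le_card_of_injective
      (fun v => ⟨g v.1 (Finset.mem_filter.1 v.2).2, hg v.1 (Finset.mem_filter.1 v.2).2⟩) ?_
    intro a b hab
    -- The chosen matching determines `v` as the preimage of `y`.
    have h := congrArg (fun f => f.1.symm y) hab
    simp only [(Equiv.symm_apply_eq _).2 (hgx _ _).symm] at h
    exact Subtype.ext h
end

section
/- Let B be a finite subset of a group G with 1 ∉ B and let A be a finite subset of G with |A| = |B|. Then μ(B, A) ≠ 0 if and only if for every subset X ⊆ B one has |X| ≤ |((G \ A⁻¹)·X̃) \ (G \ A⁻¹)|, where A⁻¹ = {a⁻¹ : a ∈ A} and X̃ = X ∪ {1}. -/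
/-!
Join `x ∈ B` to `a ∈ A` when `x * a ∉ A`. A Wakeford pairing is a perfect matching of this
bipartite graph, and since `|A| = |B|` it is the same as a matching saturating `B`, so Hall's
marriage theorem applies. The set in the statement is the inverse of the neighbourhood of `X`:
`a⁻¹ = g * x` with `g ∉ A⁻¹` means `g = (x * a)⁻¹`, hence `x * a ∉ A`; the extra element `1`
contributes nothing, as `1 * a = a ∈ A` (`ncard_compl_mul_diff`).
-/

open scoped Pointwise

/-- The number of Wakeford pairings from `B` onto `A`: bijections `φ : B → A`
with `x * φ x ∉ A` for every `x ∈ B`. -/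
noncomputable def wakefordMu {G : Type*} [Group G] (B A : Finset G) : ℕ :=
  Nat.card {φ : ↥B ≃ ↥A // ∀ x : ↥B, (x : G) * ((φ x : G)) ∉ A}

/-- The neighbours of `x` in the bipartite graph of admissible pairs. -/
def wakefordNbrs {G : Type*} [Group G] [DecidableEq G] (A : Finset G) (x : G) : Finset G :=
  A.filter fun a => x * a ∉ A

theorem ncard_compl_mul_diff {G : Type*} [Group G] [DecidableEq G] (A X : Finset G) :
    (((((A : Set G))⁻¹)ᶜ * ((insert 1 X : Finset G) : Set G)) \ (((A : Set G))⁻¹)ᶜ).ncard =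
      (X.biUnion (wakefordNbrs A)).card := by
  have h : ((((A : Set G))⁻¹)ᶜ * ((insert 1 X : Finset G) : Set G)) \ (((A : Set G))⁻¹)ᶜ =
      ((X.biUnion (wakefordNbrs A) : Finset G) : Set G)⁻¹ := by
    ext y
    simp only [Set.mem_sdiff, Set.mem_mul, Set.mem_compl_iff, Set.mem_inv, Finset.mem_coe,
      Finset.mem_insert, not_not, Finset.mem_biUnion, wakefordNbrs, Finset.mem_filter]
    constructor
    · rintro ⟨⟨g, hg, x, rfl | hx, rfl⟩, hy⟩
      · simp_all
      · exact ⟨x, hx, hy, by simpa using hg⟩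
    · rintro ⟨x, hx, hy, hxy⟩
      exact ⟨⟨y * x⁻¹, by simpa using hxy, x, Or.inr hx, by simp⟩, hy⟩
  rw [h, Set.ncard_inv, Set.ncard_coe_finset]

/-- As `A` and `B` are equinumerous, an injective choice of neighbours is automatically onto. -/
theorem wakefordMu_ne_zero_iff {G : Type*} [Group G] [DecidableEq G] (B A : Finset G)
    (hcard : A.card = B.card) :
    wakefordMu B A ≠ 0 ↔
      ∃ f : ↥B → G, Function.Injective f ∧ ∀ x : ↥B, f x ∈ wakefordNbrs A (x : G) := by
  rw [wakefordMu, Nat.card_ne_zero, and_iff_left (inferInstance : Finite _)]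
  simp only [wakefordNbrs, Finset.mem_filter]
  constructor
  · rintro ⟨φ, hφ⟩
    exact ⟨fun x => (φ x : G), Subtype.val_injective.comp φ.injective,
      fun x => ⟨(φ x).2, hφ x⟩⟩
  · rintro ⟨f, hf, hfA⟩
    have hb : Function.Bijective (fun x : ↥B => (⟨f x, (hfA x).1⟩ : ↥A)) :=
      (Fintype.bijective_iff_injective_and_card _).2
        ⟨fun x y hxy => hf (congrArg Subtype.val hxy), by simp [hcard]⟩
    exact ⟨Equiv.ofBijective _ hb, fun x => (hfA x).2⟩

theorem stmt3 {G : Type*} [Group G] [DecidableEq G] (B A : Finset G)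
    (h1 : (1 : G) ∉ B) (hcard : A.card = B.card) :
    wakefordMu B A ≠ 0 ↔
      ∀ X ⊆ B, X.card ≤
        (((((A : Set G))⁻¹)ᶜ * ((insert 1 X : Finset G) : Set G)) \ (((A : Set G))⁻¹)ᶜ).ncard := by
  simp only [ncard_compl_mul_diff]
  rw [wakefordMu_ne_zero_iff B A hcard,
    ← Finset.all_card_le_biUnion_card_iff_exists_injective (fun x : ↥B => wakefordNbrs A (x : G))]
  -- Hall's condition quantifies over subsets of the subtype `↥B`; transfer it to subsets of `B`.
  constructor
  · intro h X hX
    have hm : (X.subtype (· ∈ B)).map (Function.Embedding.subtype _) = X :=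
      Finset.subtype_map_of_mem fun x hx => hX hx
    rw [← hm, Finset.card_map, Finset.map_eq_image, Finset.image_biUnion]
    exact h _
  · intro h s
    have := h (s.map (Function.Embedding.subtype _)) (by
      intro x hx
      obtain ⟨y, -, rfl⟩ := Finset.mem_map.1 hx
      exact y.2)
    rwa [Finset.card_map, Finset.map_eq_image, Finset.image_biUnion] at this
end

section
/- Let B and C be nonempty finite subsets of a group G with 1 ∉ C. Then Σ_{x∈C} λ_B(x) ≥ |B|·(|C| − |B| + 1). -/
/-!
By injectivity of right translation, `λ_B(x)` counts the `b ∈ B` with `b * x ∉ B`. Summing over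
`x ∈ C` and exchanging the order of summation, it suffices to bound, for each fixed `b ∈ B`, the
number of `x ∈ C` with `b * x ∉ B` from below by `|C| - (|B| - 1)`. This holds because `x ↦ b * x`
maps the remaining `x ∈ C` injectively into `B \ {b}`, the value `b` being missed since `1 ∉ C`.
-/

/-- The Erdős–Heilbronn function: `λ_B(x) = |(Bx) \ B|`. -/
def lambdaEH {G : Type*} [Group G] [DecidableEq G] (B : Finset G) (x : G) : ℕ :=
  ((B.image fun b => b * x) \ B).card

theorem lambdaEH_eq_card_filter {G : Type*} [Group G] [DecidableEq G] (B : Finset G) (x : G) :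
    lambdaEH B x = (B.filter fun b => b * x ∉ B).card := by
  unfold lambdaEH
  rw [← Finset.card_image_of_injective (B.filter fun b => b * x ∉ B) (mul_left_injective x)]
  congr 1
  ext y
  simp only [Finset.mem_sdiff, Finset.mem_image, Finset.mem_filter]
  grind

theorem card_add_one_le_card_filter_add_card {G : Type*} [Group G] [DecidableEq G]
    (B C : Finset G) (h1 : (1 : G) ∉ C) {b : G} (hb : b ∈ B) :
    C.card + 1 ≤ (C.filter fun x => b * x ∉ B).card + B.card := by
  have h : (C.filter fun x => b * x ∈ B).card ≤ (B.erase b).card := by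
    refine Finset.card_le_card_of_injOn (fun x => b * x) ?_ (mul_right_injective b).injOn
    intro x hx
    obtain ⟨hxC, hxB⟩ := Finset.mem_filter.mp hx
    refine Finset.mem_coe.mpr (Finset.mem_erase.mpr ⟨fun h => h1 ?_, hxB⟩)
    rwa [mul_eq_left.mp h] at hxC
  have h2 := Finset.card_erase_add_one hb
  have h3 := Finset.card_filter_add_card_filter_not (s := C) (fun x => b * x ∈ B)
  omega

theorem stmt6 {G : Type*} [Group G] [DecidableEq G] (B C : Finset G)
    (hB : B.Nonempty) (hC : C.Nonempty) (h1 : (1 : G) ∉ C) :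
    (B.card : ℤ) * ((C.card : ℤ) - B.card + 1) ≤ ∑ x ∈ C, (lambdaEH B x : ℤ) := by
  have hswap : ∑ x ∈ C, lambdaEH B x = ∑ b ∈ B, (C.filter fun x => b * x ∉ B).card := by
    simp only [lambdaEH_eq_card_filter, Finset.card_filter]
    exact Finset.sum_comm
  rw [← Nat.cast_sum, hswap, Nat.cast_sum, ← nsmul_eq_mul]
  refine Finset.card_nsmul_le_sum B _ _ fun b hb => ?_
  have := card_add_one_le_card_filter_add_card B C h1 hb
  omega
end

section
/- Let S and T be nonempty finite subsets of a group G with 1 ∉ S, suppose the subgroup ⟨S⟩ generated by S is finite of order q with |S| ≤ q − 2, and put κ₂ = κ₂(S̃) where S̃ = S ∪ {1}. Then there exists x ∈ S such that λ_T(x) ≥ min{ |T|·(|S| + κ₂ − |T| + 1)/(|S| + 2κ₂), |T|·(q − |T| − 1)/(2q − |S| − 4) }. -/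
open scoped Pointwise

open Classical in
/-- The `k`-th connectivity `κ_k(S)`: the minimum of `|(XS) \ X|` over finite subsets
`X ⊆ ⟨S⟩` with `|X| ≥ k` and `|XS| ≤ |⟨S⟩| − k` (the latter condition being vacuous
when `⟨S⟩` is infinite), with the convention `min ∅ = |⟨S⟩| − k + 1`. -/
noncomputable def kappa {G : Type*} [Group G] [DecidableEq G] (k : ℕ) (S : Finset G) : ℕ :=
  let H : Subgroup G := Subgroup.closure (S : Set G)
  let F : Set ℕ := {n | ∃ X : Finset G, k ≤ X.card ∧ (X : Set G) ⊆ (H : Set G) ∧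
      ((H : Set G).Finite → (X * S).card + k ≤ Nat.card H) ∧ n = ((X * S) \ X).card}
  if F.Nonempty then sInf F else Nat.card H - k + 1

/-!
Two facts about `λ_T` carry the proof: it is subadditive, `λ_T(xy) ≤ λ_T(x) + λ_T(y)`
(`lambdaEH_mul_le`), and its sum over a set `A` not containing `1` is at least
`|T| (|A| - |T| + 1)` (`sum_lambdaEH_ge`), since the pairs `(b, bx)` with `x ∈ A` lying in `T × T`
are distinct and off the diagonal.

Let `x ∈ S` maximise `λ_T` on `S` and let `S̃ = S ∪ {1}`. Elements of `S` have `λ_T ≤ λ_T(x)` and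
elements of `S̃² \ S̃` have `λ_T ≤ 2 λ_T(x)`. Summing over `S` together with `m` elements of
`S̃² \ S̃` gives `λ_T(x) (|S| + 2m) ≥ |T| (|S| + m - |T| + 1)` (`exists_lambdaEH_ge`). If
`|S̃²| ≤ q - 2`, then `X = S̃` is admissible in the definition of `κ₂` and `m = κ₂` is allowed,
which gives the first bound; otherwise `|S̃² \ S̃| ≥ q - |S| - 2`, and `m = q - |S| - 2` gives the
second.
-/

theorem lambdaEH_mul_le {G : Type*} [Group G] [DecidableEq G] (T : Finset G) (x y : G) :
    lambdaEH T (x * y) ≤ lambdaEH T x + lambdaEH T y := by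
  unfold lambdaEH
  -- `Txy \ T` is contained in the union of `(Tx \ T)y` and `Ty \ T`.
  have hsub : (T.image fun b => b * (x * y)) \ T ⊆
      (((T.image fun b => b * x) \ T).image fun b => b * y) ∪
        ((T.image fun b => b * y) \ T) := by
    intro g hg
    simp only [Finset.mem_sdiff, Finset.mem_image, Finset.mem_union] at hg ⊢
    obtain ⟨⟨b, hb, rfl⟩, hg⟩ := hg
    by_cases h : b * x ∈ T
    · exact Or.inr ⟨⟨b * x, h, mul_assoc _ _ _⟩, hg⟩
    · exact Or.inl ⟨b * x, ⟨⟨b, hb, rfl⟩, h⟩, mul_assoc _ _ _⟩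
  calc _ ≤ _ := Finset.card_le_card hsub
    _ ≤ _ := Finset.card_union_le _ _
    _ ≤ _ := Nat.add_le_add_right Finset.card_image_le _

/-- The terms `b` with `bx ∈ T` account for the difference between `|T|` and `λ_T(x)`. -/
theorem lambdaEH_add_card_filter {G : Type*} [Group G] [DecidableEq G] (T : Finset G) (x : G) :
    lambdaEH T x + (T.filter fun b => b * x ∈ T).card = T.card := by
  have h : (T.image fun b => b * x) \ T = (T.filter fun b => ¬ b * x ∈ T).image fun b => b * x := by
    ext g
    simp only [Finset.mem_sdiff, Finset.mem_image, Finset.mem_filter]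
    constructor
    · rintro ⟨⟨b, hb, rfl⟩, hg⟩
      exact ⟨b, ⟨hb, hg⟩, rfl⟩
    · rintro ⟨b, ⟨hb, hg⟩, rfl⟩
      exact ⟨⟨b, hb, rfl⟩, hg⟩
  unfold lambdaEH
  rw [h, Finset.card_image_of_injective _ (mul_left_injective x), add_comm]
  exact Finset.card_filter_add_card_filter_not _

/-- Lower bound for the sum of `λ_T` over a set avoiding `1`, with the subtracted term moved to
the other side. -/
theorem sum_lambdaEH_ge {G : Type*} [Group G] [DecidableEq G] (T A : Finset G)
    (hA : (1 : G) ∉ A) :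
    A.card * T.card + T.card ≤ ∑ x ∈ A, lambdaEH T x + T.card * T.card := by
  have hpairs : ∑ x ∈ A, (T.filter fun b => b * x ∈ T).card ≤ T.offDiag.card := by
    rw [← Finset.card_sigma]
    refine Finset.card_le_card_of_injOn (fun p => (p.2, p.2 * p.1)) ?_ ?_
    · rintro ⟨x, b⟩ h
      simp only [Finset.coe_sigma, Set.mem_sigma_iff, Finset.mem_coe, Finset.mem_filter] at h
      simp only [Finset.mem_coe, Finset.mem_offDiag]
      refine ⟨h.2.1, h.2.2, fun e => hA ?_⟩
      rw [left_eq_mul] at e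
      exact e ▸ h.1
    · rintro ⟨x, b⟩ - ⟨y, c⟩ - h
      simp only [Prod.mk.injEq] at h
      obtain ⟨rfl, h⟩ := h
      obtain rfl := mul_left_cancel h
      rfl
  have hsum : ∑ x ∈ A, lambdaEH T x + ∑ x ∈ A, (T.filter fun b => b * x ∈ T).card
      = A.card * T.card := by
    rw [← Finset.sum_add_distrib, Finset.sum_congr rfl fun x _ => lambdaEH_add_card_filter T x,
      Finset.sum_const, smul_eq_mul]
  rw [Finset.offDiag_card] at hpairs
  have := Nat.le_mul_self T.card
  omega

/-- An element of `S` maximising `λ_T` satisfies the averaged bound coming from `S` together with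
any `m` elements of `S̃² \ S̃`. -/
theorem exists_lambdaEH_ge {G : Type*} [Group G] [DecidableEq G] (S T : Finset G)
    (hS : S.Nonempty) (h1 : (1 : G) ∉ S) :
    ∃ x ∈ S, ∀ m ≤ ((insert 1 S * insert 1 S) \ insert 1 S).card,
      (T.card : ℝ) * (S.card + m - T.card + 1) ≤ lambdaEH T x * (S.card + 2 * m) := by
  obtain ⟨x, hx, hmax⟩ := Finset.exists_max_image S (lambdaEH T) hS
  refine ⟨x, hx, fun m hm => ?_⟩
  obtain ⟨B, hB, rfl⟩ := Finset.exists_subset_card_eq hm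
  have hB2 : ∀ y ∈ B, lambdaEH T y ≤ 2 * lambdaEH T x := by
    intro y hy
    obtain ⟨hmul, hnot⟩ := Finset.mem_sdiff.1 (hB hy)
    obtain ⟨a, ha, b, hb, rfl⟩ := Finset.mem_mul.1 hmul
    -- Neither factor is `1`, as the product would then lie in `S̃`.
    have haS : a ∈ S := by
      rcases Finset.mem_insert.1 ha with rfl | h
      · exact absurd (by simpa using hb) hnot
      · exact h
    have hbS : b ∈ S := by
      rcases Finset.mem_insert.1 hb with rfl | h
      · exact absurd (by simpa using ha) hnot
      · exact h
    have := lambdaEH_mul_le T a b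
    have := hmax a haS
    have := hmax b hbS
    omega
  have hdisj : Disjoint S B := Finset.disjoint_left.2 fun y hy hyB =>
    (Finset.mem_sdiff.1 (hB hyB)).2 (Finset.mem_insert_of_mem hy)
  have h1' : (1 : G) ∉ S ∪ B := by
    rw [Finset.mem_union, not_or]
    exact ⟨h1, fun h => (Finset.mem_sdiff.1 (hB h)).2 (Finset.mem_insert_self _ _)⟩
  have key := sum_lambdaEH_ge T (S ∪ B) h1'
  rw [Finset.sum_union hdisj, Finset.card_union_of_disjoint hdisj] at key
  have hs1 := Finset.sum_le_card_nsmul S (fun y => lambdaEH T y) _ hmax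
  have hs2 := Finset.sum_le_card_nsmul B (fun y => lambdaEH T y) _ hB2
  rw [smul_eq_mul] at hs1 hs2
  have hfinal : (S.card + B.card) * T.card + T.card ≤
      S.card * lambdaEH T x + B.card * (2 * lambdaEH T x) + T.card * T.card := by omega
  have hreal : ((S.card : ℝ) + B.card) * T.card + T.card ≤
      S.card * lambdaEH T x + B.card * (2 * lambdaEH T x) + T.card * T.card := by
    exact_mod_cast hfinal
  linarith

theorem stmt7 {G : Type*} [Group G] [DecidableEq G] (S T : Finset G)
    (hS : S.Nonempty) (hT : T.Nonempty) (h1 : (1 : G) ∉ S)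
    (hfin : ((Subgroup.closure (S : Set G) : Subgroup G) : Set G).Finite)
    (hq : S.card + 2 ≤ Nat.card (Subgroup.closure (S : Set G))) :
    ∃ x ∈ S, (lambdaEH T x : ℝ) ≥
      min ((T.card : ℝ) * ((S.card : ℝ) + (kappa 2 (insert 1 S) : ℝ) - (T.card : ℝ) + 1) /
            ((S.card : ℝ) + 2 * (kappa 2 (insert 1 S) : ℝ)))
          ((T.card : ℝ) * ((Nat.card (Subgroup.closure (S : Set G)) : ℝ) - (T.card : ℝ) - 1) /
            (2 * (Nat.card (Subgroup.closure (S : Set G)) : ℝ) - (S.card : ℝ) - 4)) := by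
  obtain ⟨x, hx, hbound⟩ := exists_lambdaEH_ge S T hS h1
  refine ⟨x, hx, ?_⟩
  have hScard : (0 : ℝ) < S.card := by exact_mod_cast hS.card_pos
  have hcl : Subgroup.closure ((insert 1 S : Finset G) : Set G) = Subgroup.closure (S : Set G) := by
    rw [Finset.coe_insert, Subgroup.closure_insert_one]
  have hcard : (insert 1 S : Finset G).card = S.card + 1 := Finset.card_insert_of_notMem h1
  have hsd : ((insert 1 S * insert 1 S : Finset G) \ insert 1 S).card + (S.card + 1)
      = (insert 1 S * insert 1 S : Finset G).card := by
    rw [← hcard]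
    exact Finset.card_sdiff_add_card_eq_card
      (Finset.subset_mul_left _ (Finset.mem_insert_self _ _))
  by_cases hcase : (insert 1 S * insert 1 S : Finset G).card + 2 ≤
      Nat.card (Subgroup.closure (S : Set G))
  · have hkappa : kappa 2 (insert 1 S) ≤
        ((insert 1 S * insert 1 S : Finset G) \ insert 1 S).card := by
      have hmem : ((insert 1 S * insert 1 S : Finset G) \ insert 1 S).card ∈
          {n | ∃ X : Finset G, 2 ≤ X.card ∧
            (X : Set G) ⊆ (Subgroup.closure ((insert 1 S : Finset G) : Set G) : Set G) ∧
            ((Subgroup.closure ((insert 1 S : Finset G) : Set G) : Set G).Finite →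
              (X * insert 1 S).card + 2 ≤
                Nat.card (Subgroup.closure ((insert 1 S : Finset G) : Set G))) ∧
            n = ((X * insert 1 S) \ X).card} :=
        ⟨insert 1 S, by have := hS.card_pos; omega, Subgroup.subset_closure,
          fun _ => by rw [hcl]; exact hcase, rfl⟩
      unfold kappa
      rw [if_pos ⟨_, hmem⟩]
      exact Nat.sInf_le hmem
    refine ge_iff_le.2 ((min_le_left _ _).trans ?_)
    rw [div_le_iff₀ (by positivity)]
    exact hbound _ hkappa
  · refine ge_iff_le.2 ((min_le_right _ _).trans ?_)
    obtain ⟨m, hm⟩ := Nat.exists_eq_add_of_le hq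
    have hb := hbound m (by omega)
    rw [hm]
    push_cast
    rw [div_le_iff₀ (by have : (0 : ℝ) ≤ m := m.cast_nonneg; linarith)]
    linarith
end

section
/- Let B be a finite Chowla subset of a group G and let A be a finite subset of G with |A| = |B|. Then μ(B, A) ≠ 0; that is, there exists a Wakeford pairing from B onto A. -/
/-- A nonempty finite subset `S` of a group is a *Chowla subset* if the order of every
element of `S` is at least `|S| + 1` (elements of infinite order, i.e. `orderOf x = 0`,
are regarded as satisfying this). -/
def IsChowla {G : Type*} [Group G] (S : Finset G) : Prop :=
  S.Nonempty ∧ ∀ x ∈ S, S.card + 1 ≤ orderOf x ∨ orderOf x = 0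

section Isoperimetric

open scoped Pointwise

variable {G : Type*} [Group G] [DecidableEq G]

/-- `X` is an *isoperimetric atom* of `U` with connectivity `κ`: among the nonempty finite sets `Z`
with `U * Z ≠ G`, it minimizes first `|U * Z| - |Z|`, with minimum `κ`, and then `|Z|`. -/
structure IsIsoAtom (U X : Finset G) (κ : ℕ) : Prop where
  nonempty : X.Nonempty
  exists_notMem : ∃ g, g ∉ U * X
  card_eq : (U * X).card = κ + X.card
  le : ∀ Z : Finset G, Z.Nonempty → (∃ g, g ∉ U * Z) → κ + Z.card ≤ (U * Z).card
  card_le : ∀ Z : Finset G, Z.Nonempty → (∃ g, g ∉ U * Z) →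
    (U * Z).card = κ + Z.card → X.card ≤ Z.card

/-- Any right translate of an atom is an atom. -/
theorem IsIsoAtom.mul_singleton {U X : Finset G} {κ : ℕ} (h : IsIsoAtom U X κ) (g : G) :
    IsIsoAtom U (X * {g}) κ where
  nonempty := h.nonempty.mul (Finset.singleton_nonempty g)
  exists_notMem := by
    obtain ⟨y, hy⟩ := h.exists_notMem
    refine ⟨y * g, fun hmem => hy ?_⟩
    rw [← mul_assoc, Finset.mem_mul] at hmem
    obtain ⟨a, ha, b, hb, hab⟩ := hmem
    rw [Finset.mem_singleton] at hb
    subst hb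
    rwa [← mul_right_cancel hab]
  card_eq := by
    rw [← mul_assoc, Finset.card_mul_singleton, Finset.card_mul_singleton, h.card_eq]
  le := h.le
  card_le := by
    rw [Finset.card_mul_singleton]
    exact h.card_le

/-- Two right translates of an atom that meet are equal. The hypothesis `hfin` bounds the atom when
`G` is finite and is vacuous otherwise; it ensures that `U * (X ∪ Xg)` is not all of `G`. -/
theorem IsIsoAtom.translate_eq {U X : Finset G} {κ : ℕ} (h : IsIsoAtom U X κ)
    (hfin : ∀ F : Finset G, (∀ g, g ∈ F) → 2 * X.card + κ ≤ F.card) (g : G)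
    (hmeet : (X ∩ (X * {g})).Nonempty) : X * {g} = X := by
  have hg := h.mul_singleton g
  set Y := X * {g} with hY
  have hYc : Y.card = X.card := Finset.card_mul_singleton X g
  have hinter : U * (X ∩ Y) ⊆ (U * X) ∩ (U * Y) := Finset.mul_inter_subset
  have hcI := Finset.card_le_card hinter
  have hsub := Finset.card_union_add_card_inter (U * X) (U * Y)
  rw [← Finset.mul_union] at hsub
  have hXY := Finset.card_union_add_card_inter X Y
  have e1 := h.card_eq
  have e2 := hg.card_eq
  have hne : ∃ y, y ∉ U * (X ∩ Y) := by
    obtain ⟨y, hy⟩ := h.exists_notMem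
    exact ⟨y, fun hm => hy (Finset.mem_inter.1 (hinter hm)).1⟩
  have hI := h.le _ hmeet hne
  have hpos := hmeet.card_pos
  have hneU : ∃ y, y ∉ U * (X ∪ Y) := by
    by_contra! hall
    have := hfin _ hall
    omega
  have hU := h.le _ (h.nonempty.mono Finset.subset_union_left) hneU
  have hc := h.card_le _ hmeet hne (by omega)
  have hX : X ∩ Y = X := Finset.eq_of_subset_of_card_le Finset.inter_subset_left hc
  have hXsub : X ⊆ Y := by
    rw [← hX]
    exact Finset.inter_subset_right
  exact (Finset.eq_of_subset_of_card_le hXsub hYc.le).symm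

/-- Either `T` or `T⁻¹` has an atom that satisfies the size bound of `IsIsoAtom.translate_eq` and
whose connectivity is a lower bound for `|T * Z| - |Z|`. -/
theorem exists_isIsoAtom {T Z : Finset G} (hT : 1 ∈ T) (hZ : Z.Nonempty)
    (hTZ : ∃ g, g ∉ T * Z) :
    ∃ U X κ, (U = T ∨ U = T⁻¹) ∧ IsIsoAtom U X κ ∧
      (∀ F : Finset G, (∀ g, g ∈ F) → 2 * X.card + κ ≤ F.card) ∧
      κ + Z.card ≤ (T * Z).card := by
  let P : Set (Finset G × Finset G) :=
    {p | (p.1 = T ∨ p.1 = T⁻¹) ∧ p.2.Nonempty ∧ ∃ g, g ∉ p.1 * p.2}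
  let f : Finset G × Finset G → ℕ ×ₗ ℕ :=
    fun p => toLex ((p.1 * p.2).card - p.2.card, p.2.card)
  obtain ⟨⟨U, X⟩, ⟨hU, hX, hUX⟩, hmin⟩ :=
    (InvImage.wf f wellFounded_lt).has_min P ⟨(T, Z), Or.inl rfl, hZ, hTZ⟩
  dsimp only at hU hX hUX
  have hone : ∀ V : Finset G, (V = T ∨ V = T⁻¹) → (1 : G) ∈ V := by
    rintro V (rfl | rfl)
    · exact hT
    · simpa using hT
  have hmono : ∀ V : Finset G, (V = T ∨ V = T⁻¹) → ∀ W : Finset G, W.card ≤ (V * W).card :=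
    fun V hV W => Finset.card_le_card (Finset.subset_mul_right W (hone V hV))
  have key : ∀ V W : Finset G, (V = T ∨ V = T⁻¹) → W.Nonempty → (∃ g, g ∉ V * W) →
      (U * X).card - X.card < (V * W).card - W.card ∨
      ((U * X).card - X.card = (V * W).card - W.card ∧ X.card ≤ W.card) := by
    intro V W hV hW hVW
    have := hmin (V, W) ⟨hV, hW, hVW⟩
    simp only [InvImage, f, Prod.Lex.toLex_lt_toLex] at this
    omega
  have hUXc := hmono U hU X
  refine ⟨U, X, (U * X).card - X.card, hU, ⟨hX, hUX, by omega, ?_, ?_⟩, ?_, ?_⟩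
  · intro W hW hUW
    have := key U W hU hW hUW
    have := hmono U hU W
    omega
  · intro W hW hUW hc
    have := key U W hU hW hUW
    omega
  · intro F hF
    have hV : U⁻¹ = T ∨ U⁻¹ = T⁻¹ := by
      rcases hU with rfl | rfl
      · exact Or.inr rfl
      · exact Or.inl (inv_inv T)
    -- the dual pair `(U⁻¹, G \ U * X)`
    have hdisj : U⁻¹ * (F \ (U * X)) ⊆ F \ X := by
      intro y hy
      obtain ⟨u, hu, w, hw, rfl⟩ := Finset.mem_mul.1 hy
      refine Finset.mem_sdiff.2 ⟨hF _, fun hmem => (Finset.mem_sdiff.1 hw).2 ?_⟩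
      exact Finset.mem_mul.2 ⟨u⁻¹, Finset.mem_inv'.1 hu, u * w, hmem, by group⟩
    have hW : (F \ (U * X)).Nonempty := by
      obtain ⟨y, hy⟩ := hUX
      exact ⟨y, Finset.mem_sdiff.2 ⟨hF y, hy⟩⟩
    have hnot : ∃ g, g ∉ U⁻¹ * (F \ (U * X)) := by
      obtain ⟨x, hx⟩ := hX
      exact ⟨x, fun hm => (Finset.mem_sdiff.1 (hdisj hm)).2 hx⟩
    have k := key _ _ hV hW hnot
    have c1 := Finset.card_le_card hdisj
    have c2 := Finset.card_sdiff_add_card_eq_card (fun x _ => hF x : X ⊆ F)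
    have c3 := Finset.card_sdiff_add_card_eq_card (fun x _ => hF x : U * X ⊆ F)
    have c4 := hmono _ hV (F \ (U * X))
    omega
  · have := key T Z (Or.inl rfl) hZ hTZ
    have := hmono T (Or.inl rfl) Z
    omega

/-- An atom of a generating set `U ∋ 1` whose nontrivial elements all have order at least `|U|` has
connectivity at least `|U| - 1`. -/
theorem IsIsoAtom.card_le_succ {U X : Finset G} {κ : ℕ} (h : IsIsoAtom U X κ)
    (hfin : ∀ F : Finset G, (∀ g, g ∈ F) → 2 * X.card + κ ≤ F.card)
    (hU : 1 ∈ U) (hgen : Subgroup.closure (U : Set G) = ⊤)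
    (hord : ∀ t ∈ U, t ≠ 1 → U.card ≤ orderOf t ∨ orderOf t = 0) :
    U.card ≤ κ + 1 := by
  wlog h1 : (1 : G) ∈ X generalizing X
  · obtain ⟨x, hx⟩ := h.nonempty
    refine this (h.mul_singleton x⁻¹) ?_ ?_
    · rwa [Finset.card_mul_singleton]
    · exact Finset.mem_mul.2 ⟨x, hx, x⁻¹, Finset.mem_singleton_self _, mul_inv_cancel x⟩
  have htr : ∀ x ∈ X, X * {x} = X := fun x hx =>
    h.translate_eq hfin x ⟨x, Finset.mem_inter.2
      ⟨hx, Finset.mem_mul.2 ⟨1, h1, x, Finset.mem_singleton_self _, one_mul x⟩⟩⟩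
  have hmul : ∀ x ∈ X, ∀ y ∈ X, x * y ∈ X := by
    intro x hx y hy
    rw [← htr y hy]
    exact Finset.mul_mem_mul hx (Finset.mem_singleton_self y)
  have hdiv : ∀ x ∈ X, ∀ y, y * x ∈ X → y ∈ X := by
    intro x hx y hyx
    rw [← htr x hx] at hyx
    obtain ⟨a, ha, b, hb, hab⟩ := Finset.mem_mul.1 hyx
    rw [Finset.mem_singleton] at hb
    subst hb
    rwa [← mul_right_cancel hab]
  have hcard := h.card_eq
  by_cases hint : ∃ t ∈ U, t ≠ 1 ∧ t ∈ X
  · obtain ⟨t, htU, ht1, htX⟩ := hint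
    have hpow : ∀ n : ℕ, t ^ n ∈ X := by
      intro n
      induction n with
      | zero => simpa using h1
      | succ n ih => rw [pow_succ]; exact hmul _ ih _ htX
    have hfo : IsOfFinOrder t := by
      by_contra hinf
      exact Set.infinite_of_injective_forall_mem
        (injective_pow_iff_not_isOfFinOrder.2 hinf) hpow X.finite_toSet
    have hle : orderOf t ≤ X.card := by
      have hinj := Finset.card_le_card_of_injOn (s := Finset.range (orderOf t)) (t := X)
        (fun n => t ^ n) (fun n _ => hpow n) (by
          intro a ha b hb hab
          exact pow_injOn_Iio_orderOf (by simpa using ha) (by simpa using hb) hab)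
      simpa using hinj
    have hUX : U.card ≤ X.card := by
      have := hfo.orderOf_pos
      have := hord t htU ht1
      omega
    -- since `U` generates `G`, some element of `U` lies outside the subgroup `X`
    obtain ⟨s, hsU, hsX⟩ : ∃ s ∈ U, s ∉ X := by
      by_contra! hsub
      let H : Subgroup G :=
        { carrier := X
          mul_mem' := fun {a b} ha hb => hmul a ha b hb
          one_mem' := h1
          inv_mem' := fun {a} ha => hdiv a ha _ (by simpa using h1) }
      have hle : Subgroup.closure (U : Set G) ≤ H :=
        (Subgroup.closure_le H).2 fun u hu => hsub u hu
      rw [hgen] at hle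
      obtain ⟨y, hy⟩ := h.exists_notMem
      exact hy (Finset.subset_mul_right X hU (hle (Subgroup.mem_top y)))
    have hdisj : Disjoint X ({s} * X) := by
      rw [Finset.disjoint_left]
      intro y hy hys
      obtain ⟨a, ha, b, hb, rfl⟩ := Finset.mem_mul.1 hys
      rw [Finset.mem_singleton] at ha
      subst ha
      exact hsX (hdiv b hb _ hy)
    have hsub : X ∪ {s} * X ⊆ U * X :=
      Finset.union_subset (Finset.subset_mul_right X hU)
        (Finset.mul_subset_mul_right (Finset.singleton_subset_iff.2 hsU))
    have hc := Finset.card_le_card hsub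
    rw [Finset.card_union_of_disjoint hdisj, Finset.card_singleton_mul] at hc
    omega
  · push Not at hint
    have hdisj : Disjoint X (U.erase 1) := by
      rw [Finset.disjoint_left]
      intro y hy hyU
      exact hint y (Finset.mem_of_mem_erase hyU) (Finset.ne_of_mem_erase hyU) hy
    have hsub : X ∪ U.erase 1 ⊆ U * X :=
      Finset.union_subset (Finset.subset_mul_right X hU)
        ((Finset.erase_subset 1 U).trans (Finset.subset_mul_left U h1))
    have hc := Finset.card_le_card hsub
    rw [Finset.card_union_of_disjoint hdisj, Finset.card_erase_of_mem hU] at hc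
    omega

/-- The Chowla-type bound for a generating set `T`. -/
theorem card_add_card_le_of_closure_eq_top {T Z : Finset G} (hT : 1 ∈ T)
    (hgen : Subgroup.closure (T : Set G) = ⊤)
    (hord : ∀ t ∈ T, t ≠ 1 → T.card ≤ orderOf t ∨ orderOf t = 0)
    (hZ : Z.Nonempty) (hTZ : ∃ g, g ∉ T * Z) :
    T.card + Z.card ≤ (T * Z).card + 1 := by
  obtain ⟨U, X, κ, hU, hatom, hfin, hκ⟩ := exists_isIsoAtom hT hZ hTZ
  suffices hc : T.card ≤ κ + 1 by omega
  rcases hU with rfl | rfl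
  · exact hatom.card_le_succ hfin hT hgen hord
  · rw [← Finset.card_inv T]
    refine hatom.card_le_succ hfin (by simpa using hT) ?_ ?_
    · rw [Finset.coe_inv, Subgroup.closure_inv, hgen]
    · intro t ht ht1
      have := hord t⁻¹ (Finset.mem_inv'.1 ht) (by simpa using ht1)
      rwa [orderOf_inv, ← Finset.card_inv T] at this

/-- Chowla-type theorem in an arbitrary group: if the nontrivial elements of `T ∋ 1` have order at
least `|T|` and greater than `|T * Z|`, then `|T * Z| ≥ |T| + |Z| - 1`. -/
theorem card_add_card_le_card_mul {T Z : Finset G} (hT : 1 ∈ T)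
    (hord : ∀ t ∈ T, t ≠ 1 →
      (T.card ≤ orderOf t ∧ (T * Z).card < orderOf t) ∨ orderOf t = 0)
    (hZ : Z.Nonempty) :
    T.card + Z.card ≤ (T * Z).card + 1 := by
  classical
  by_cases htriv : ∃ t ∈ T, t ≠ 1
  swap
  · push Not at htriv
    have hT1 : T = {1} := Finset.eq_singleton_iff_unique_mem.2 ⟨hT, htriv⟩
    subst hT1
    simp [add_comm]
  obtain ⟨t₀, ht₀, ht₀1⟩ := htriv
  obtain ⟨z, hz⟩ := hZ
  set K : Subgroup G := Subgroup.closure (T : Set G) with hK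
  have hTK : ∀ t ∈ T, t ∈ K := fun t ht => Subgroup.subset_closure ht
  have hιinj : Function.Injective (fun k : K => (k : G) * z) :=
    fun a b hab => Subtype.ext (mul_right_cancel hab)
  -- `Z₁` is the part of `Z` in the coset `K * z`, translated into `K`; `Z₂` is the rest of `Z`
  let T₁ : Finset K := T.preimage Subtype.val Subtype.val_injective.injOn
  let Z₁ : Finset K := Z.preimage (fun k : K => (k : G) * z) hιinj.injOn
  let Z₂ : Finset G := Z.filter fun x => x * z⁻¹ ∉ K
  have hTc : T₁.card = T.card := by
    have : T₁.image Subtype.val = T := by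
      ext x
      simp only [T₁, Finset.mem_image, Finset.mem_preimage]
      exact ⟨by rintro ⟨y, hy, rfl⟩; exact hy, fun hx => ⟨⟨x, hTK x hx⟩, hx, rfl⟩⟩
    rw [← Finset.card_image_of_injective T₁ Subtype.val_injective, this]
  have hZc : Z.card = Z₁.card + Z₂.card := by
    have : Z₁.image (fun k : K => (k : G) * z) = Z.filter fun x => x * z⁻¹ ∈ K := by
      ext x
      simp only [Z₁, Finset.mem_image, Finset.mem_preimage, Finset.mem_filter]
      constructor
      · rintro ⟨k, hk, rfl⟩
        exact ⟨hk, by simp⟩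
      · rintro ⟨hx, hxK⟩
        exact ⟨⟨_, hxK⟩, by simpa using hx, by simp⟩
    rw [← Finset.card_image_of_injective Z₁ hιinj, this]
    exact (Finset.card_filter_add_card_filter_not _).symm
  have hsub : (T₁ * Z₁).image (fun k : K => (k : G) * z) ∪ Z₂ ⊆ T * Z := by
    refine Finset.union_subset ?_ ((Finset.filter_subset _ _).trans (Finset.subset_mul_right Z hT))
    intro x hx
    obtain ⟨k, hk, rfl⟩ := Finset.mem_image.1 hx
    obtain ⟨t, ht, y, hy, rfl⟩ := Finset.mem_mul.1 hk
    refine Finset.mem_mul.2 ⟨t, Finset.mem_preimage.1 ht, y * z,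
      Finset.mem_preimage (f := fun k : K => (k : G) * z) (hf := hιinj.injOn) |>.1 hy, ?_⟩
    simp [mul_assoc]
  have hdisj : Disjoint ((T₁ * Z₁).image (fun k : K => (k : G) * z)) Z₂ := by
    rw [Finset.disjoint_left]
    intro x hx hx2
    obtain ⟨k, hk, rfl⟩ := Finset.mem_image.1 hx
    exact (Finset.mem_filter.1 hx2).2 (by simp)
  have hc := Finset.card_le_card hsub
  rw [Finset.card_union_of_disjoint hdisj, Finset.card_image_of_injective _ hιinj] at hc
  have hnot : ∃ g, g ∉ T₁ * Z₁ := by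
    -- otherwise `K` is finite with at most `|T * Z|` elements, fewer than the order of `t₀ ∈ K`
    by_contra! hall
    have hKfin : Finite K := Set.finite_univ_iff.1
      ((T₁ * Z₁).finite_toSet.subset fun g _ => hall g)
    have hKcard : Nat.card K = (T₁ * Z₁).card := by
      have := Fintype.ofFinite K
      rw [Finset.eq_univ_iff_forall.2 hall, Finset.card_univ, Nat.card_eq_fintype_card]
    have hle : orderOf (⟨t₀, hTK t₀ ht₀⟩ : K) ≤ Nat.card K := orderOf_le_card
    have hpos : 0 < orderOf (⟨t₀, hTK t₀ ht₀⟩ : K) := orderOf_pos _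
    rw [Subgroup.orderOf_mk] at hle hpos
    have := hord t₀ ht₀ ht₀1
    omega
  have hmain := card_add_card_le_of_closure_eq_top (T := T₁) (Z := Z₁)
    (Finset.mem_preimage.2 hT) ?_ ?_ ⟨1, Finset.mem_preimage.2 (by simpa using hz)⟩ hnot
  · omega
  · rw [Finset.coe_preimage]
    exact Subgroup.closure_closure_coe_preimage
  · intro t ht ht1
    have := hord t (Finset.mem_preimage.1 ht) (by simpa using ht1)
    rw [Subgroup.orderOf_coe] at this
    omega

end Isoperimetric

theorem stmt15 {G : Type*} [Group G] (B : Finset G) (hB : IsChowla B)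
    (A : Finset G) (hcard : A.card = B.card) :
    wakefordMu B A ≠ 0 := by
  classical
  have hall : ∀ s : Finset ↥B,
      s.card ≤ (s.biUnion fun x => A.filter fun a => (x : G) * a ∉ A).card := by
    intro s
    set N := s.biUnion fun x => A.filter fun a => (x : G) * a ∉ A with hN
    have hNA : N ⊆ A := Finset.biUnion_subset.2 fun x _ => Finset.filter_subset _ _
    have hV : ∀ a ∈ A \ N, ∀ x ∈ s, (x : G) * a ∈ A := by
      intro a ha x hx
      by_contra hxa
      exact (Finset.mem_sdiff.1 ha).2 (Finset.mem_biUnion.2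
        ⟨x, hx, Finset.mem_filter.2 ⟨(Finset.mem_sdiff.1 ha).1, hxa⟩⟩)
    have hVc := Finset.card_sdiff_add_card_eq_card hNA
    have hsB : s.card ≤ B.card := by
      simpa using Finset.card_le_univ s
    rcases (A \ N).eq_empty_or_nonempty with hemp | hne
    · rw [hemp, Finset.card_empty] at hVc
      omega
    have hBord : ∀ x ∈ B, x ≠ 1 := by
      rintro x hx rfl
      have := hB.2 1 hx
      have := hB.1.card_pos
      rw [orderOf_one] at *
      omega
    let S : Finset G := s.map (Function.Embedding.subtype _)
    have hSB : ∀ x ∈ S, x ∈ B := by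
      intro x hx
      obtain ⟨y, -, rfl⟩ := Finset.mem_map.1 hx
      exact y.2
    have hTc : (insert 1 S).card = s.card + 1 := by
      rw [Finset.card_insert_of_notMem fun h => hBord 1 (hSB 1 h) rfl, Finset.card_map]
    open scoped Pointwise in
    have hsub : insert 1 S * (A \ N) ⊆ A := by
      intro y hy
      obtain ⟨t, ht, a, ha, rfl⟩ := Finset.mem_mul.1 hy
      rcases Finset.mem_insert.1 ht with rfl | ht
      · simpa using (Finset.mem_sdiff.1 ha).1
      · obtain ⟨x, hx, rfl⟩ := Finset.mem_map.1 ht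
        exact hV a ha x hx
    have hc := Finset.card_le_card hsub
    have hmain := card_add_card_le_card_mul (T := insert 1 S) (Z := A \ N)
      (Finset.mem_insert_self 1 S) (by
        intro t ht ht1
        have := hB.2 t (hSB t (Finset.mem_of_mem_insert_of_ne ht ht1))
        omega) hne
    omega
  obtain ⟨f, hinj, hf⟩ := (Finset.all_card_le_biUnion_card_iff_exists_injective _).1 hall
  have hfA : ∀ x, f x ∈ A := fun x => (Finset.mem_filter.1 (hf x)).1
  have hbij : Function.Bijective (fun x => (⟨f x, hfA x⟩ : ↥A)) := by
    rw [Fintype.bijective_iff_injective_and_card]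
    exact ⟨fun x y hxy => hinj (congrArg Subtype.val hxy), by simp [hcard]⟩
  have : Nonempty {φ : ↥B ≃ ↥A // ∀ x : ↥B, (x : G) * ((φ x : G)) ∉ A} :=
    ⟨Equiv.ofBijective _ hbij, fun x => (Finset.mem_filter.1 (hf x)).2⟩
  exact Nat.card_pos.ne'
end

section
/- Let B be a nonempty finite subset of a group G with 1 ∉ B, and let A be a finite subset of G with |A| = |B|. If |B| < p(G), then μ(B, A) ≠ 0. -/
/-- The size condition on `B` extends from proper subgroups to the whole group, since `B` misses
the identity. -/
lemma card_lt_minOrder {G : Type*} [Group G] (B : Finset G) (h1 : (1 : G) ∉ B)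
    (hp : ∀ M : Subgroup G, (M : Set G).Finite → 2 ≤ Nat.card M → M ≠ ⊤ →
      B.card < Nat.card M) :
    ((B.card + 1 : ℕ) : ℕ∞) ≤ Monoid.minOrder G := by
  classical
  rw [Monoid.le_minOrder_iff_forall_subgroup]
  intro M hM hfin
  have : Finite M := hfin
  have h2 : 2 ≤ Nat.card M := (Subgroup.one_lt_card_iff_ne_bot M).2 hM
  rw [Nat.cast_le, Nat.succ_le_iff]
  by_cases htop : M = ⊤
  · subst htop
    have hG : Finite G := Set.finite_univ_iff.1 (by simpa using hfin)
    have := Fintype.ofFinite G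
    rw [Subgroup.card_top, Nat.card_eq_fintype_card]
    exact Finset.card_lt_univ_of_notMem h1
  · exact hp M hfin h2 htop

open scoped Pointwise in
/-- The Cauchy-Davenport step: `T` is a set of elements of `A` whose left translates by `S` stay
in `A`. -/
lemma card_add_card_le {G : Type*} [Group G] (S T A : Finset G) (h1 : (1 : G) ∉ S)
    (hA : ((A.card + 1 : ℕ) : ℕ∞) ≤ Monoid.minOrder G) (hSA : S.card ≤ A.card)
    (hTA : T ⊆ A) (hST : ∀ x ∈ S, ∀ a ∈ T, x * a ∈ A) :
    S.card + T.card ≤ A.card := by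
  classical
  rcases T.eq_empty_or_nonempty with rfl | hT
  · simpa using hSA
  have hsub : insert 1 S * T ⊆ A := by
    intro y hy
    obtain ⟨x, hx, a, ha, rfl⟩ := Finset.mem_mul.1 hy
    rcases Finset.mem_insert.1 hx with rfl | hx
    · simpa using hTA ha
    · exact hST x hx a ha
  have hle := Finset.card_le_card hsub
  have hcd := cauchy_davenport_minOrder_mul (Finset.insert_nonempty 1 S) hT
  rw [Finset.card_insert_of_notMem h1] at hcd
  rcases min_le_iff.1 hcd with h | h
  · have := Nat.cast_le.1 (hA.trans h)
    omega
  · have := Nat.cast_le.1 h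
    omega

theorem stmt16 {G : Type*} [Group G] (B : Finset G) (hBne : B.Nonempty)
    (h1 : (1 : G) ∉ B) (A : Finset G) (hcard : A.card = B.card)
    (hp : ∀ M : Subgroup G, (M : Set G).Finite → 2 ≤ Nat.card M → M ≠ ⊤ →
      B.card < Nat.card M) :
    wakefordMu B A ≠ 0 := by
  classical
  have hmin := card_lt_minOrder B h1 hp
  rw [← hcard] at hmin
  obtain ⟨f, hfinj, hf⟩ := (Finset.all_card_le_biUnion_card_iff_exists_injective
    (fun x : ↥B => A.filter fun a => (x : G) * a ∉ A)).1 (by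
      intro S
      set N := S.biUnion fun x : ↥B => A.filter fun a => (x : G) * a ∉ A with hN
      have hNA : N ⊆ A := Finset.biUnion_subset.2 fun _ _ => Finset.filter_subset _ _
      have hSB : S.map (Function.Embedding.subtype _) ⊆ B := by
        intro y hy
        obtain ⟨x, -, rfl⟩ := Finset.mem_map.1 hy
        exact x.2
      have key := card_add_card_le (S.map (Function.Embedding.subtype _)) (A \ N) A
        (fun h => h1 (hSB h)) hmin (hcard ▸ Finset.card_le_card hSB) Finset.sdiff_subset (by
          intro y hy a ha
          obtain ⟨x, hx, rfl⟩ := Finset.mem_map.1 hy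
          obtain ⟨haA, haN⟩ := Finset.mem_sdiff.1 ha
          by_contra hxa
          exact haN (Finset.mem_biUnion.2 ⟨x, hx, Finset.mem_filter.2 ⟨haA, hxa⟩⟩))
      rw [Finset.card_map] at key
      have := Finset.card_sdiff_add_card_eq_card hNA
      omega)
  have hfA : ∀ x, f x ∈ A := fun x => (Finset.mem_filter.1 (hf x)).1
  have hbij : Function.Bijective fun x : ↥B => (⟨f x, hfA x⟩ : ↥A) := by
    rw [Fintype.bijective_iff_injective_and_card]
    exact ⟨fun x y h => hfinj (congrArg Subtype.val h), by simp [hcard]⟩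
  have : Nonempty {φ : ↥B ≃ ↥A // ∀ x : ↥B, (x : G) * ((φ x : G)) ∉ A} :=
    ⟨⟨Equiv.ofBijective _ hbij, fun x => (Finset.mem_filter.1 (hf x)).2⟩⟩
  exact Nat.card_pos.ne'
end
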